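/- arXiv:2109.00473 — 6 statements merged into one kernel-verified Lean document; each statement's English description precedes it below -/
import Mathlib

section
/- Any two tournaments on the 5-element set Fin 5 in which every vertex has out-degree exactly 2 are isomorphic: there is a permutation π of the vertices with π(a) → π(b) in the second tournament iff a → b in the first. -/
/-- A tournament: an irreflexive relation such that for distinct vertices exactly one
direction holds. -/
def IsTournament (r : Fin 5 → Fin 5 → Prop) : Prop :=
  (∀ a, ¬ r a a) ∧ ∀ a b : Fin 5, a ≠ b → Xor' (r a b) (r b a)

/-- The out-degree of a vertex: the number of vertices it defeats. -/
noncomputable def outDeg (r : Fin 5 → Fin 5 → Prop) (v : Fin 5) : ℕ :=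
  Nat.card {w : Fin 5 // r v w}

/-- The tournament on five vertices encoded by ten Booleans (the entries above the diagonal). -/
def encT (x01 x02 x03 x04 x12 x13 x14 x23 x24 x34 : Bool) : Fin 5 → Fin 5 → Bool :=
  ![![false, x01, x02, x03, x04],
    ![!x01, false, x12, x13, x14],
    ![!x02, !x12, false, x23, x24],
    ![!x03, !x13, !x23, false, x34],
    ![!x04, !x14, !x24, !x34, false]]

/-- A good cyclic ordering `0, a, b, c, d`: each vertex beats the next two. -/
def Good (t : Fin 5 → Fin 5 → Bool) (a b c d : Fin 5) : Prop :=
  t 0 a = true ∧ t 0 b = true ∧ t a b = true ∧ t a c = true ∧ t b c = true ∧ t b d = true ∧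
    t c d = true ∧ t c 0 = true ∧ t d 0 = true ∧ t d a = true

instance (t : Fin 5 → Fin 5 → Bool) (a b c d : Fin 5) : Decidable (Good t a b c d) := by
  unfold Good; infer_instance

/-- Boolean row sum. -/
def rowSum (t : Fin 5 → Fin 5 → Bool) (v : Fin 5) : ℕ :=
  (t v 0).toNat + (t v 1).toNat + (t v 2).toNat + (t v 3).toNat + (t v 4).toNat

theorem key : ∀ x01 x02 x03 x04 x12 x13 x14 x23 x24 x34 : Bool,
    (∀ v, rowSum (encT x01 x02 x03 x04 x12 x13 x14 x23 x24 x34) v = 2) →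
    ∃ a b c d, Good (encT x01 x02 x03 x04 x12 x13 x14 x23 x24 x34) a b c d := by
  decide +kernel

theorem exists_cycle (r : Fin 5 → Fin 5 → Prop) (hr : IsTournament r)
    (h2 : ∀ v, outDeg r v = 2) :
    ∃ π : Equiv.Perm (Fin 5), ∀ i j : Fin 5, r (π i) (π j) ↔ (j = i + 1 ∨ j = i + 2) := by
  classical
  obtain ⟨hirr, hx⟩ := hr
  have hneg : ∀ a b, a ≠ b → (r b a ↔ ¬ r a b) := by
    intro a b hab
    have := hx a b hab
    unfold Xor' Xor at this
    tauto
  let t : Fin 5 → Fin 5 → Bool := fun a b => decide (r a b)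
  have ht : t = encT (t 0 1) (t 0 2) (t 0 3) (t 0 4) (t 1 2) (t 1 3) (t 1 4) (t 2 3) (t 2 4)
      (t 3 4) := by
    have hn : ∀ a b, a ≠ b → t b a = !(t a b) := by
      intro a b hab
      simp [t, hneg a b hab]
    have hd : ∀ a, t a a = false := by
      intro a
      simp [t, hirr a]
    funext a b
    fin_cases a <;> fin_cases b <;> first | rfl | exact hd _ | exact hn _ _ (by decide)
  have hs : ∀ v, rowSum t v = 2 := by
    intro v
    rw [← h2 v, outDeg, Nat.card_eq_fintype_card, Fintype.card_subtype, Finset.card_filter,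
      Fin.sum_univ_five]
    simp [rowSum, t, Bool.toNat, Bool.cond_decide]
  obtain ⟨a, b, c, d, hg⟩ : ∃ a b c d, Good t a b c d := by
    rw [ht] at hs ⊢
    exact key _ _ _ _ _ _ _ _ _ _ hs
  simp only [Good, t, decide_eq_true_eq] at hg
  obtain ⟨h1, h2, h3, h4, h5, h6, h7, h8, h9, h10⟩ := hg
  have has : ∀ a b, r a b → ¬ r b a := by
    intro a b h h'
    by_cases hab : a = b
    · subst hab; exact hirr _ h
    · exact (hneg a b hab).1 h' h
  let f : Fin 5 → Fin 5 := ![0, a, b, c, d]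
  have hf : ∀ i j : Fin 5, r (f i) (f j) ↔ (j = i + 1 ∨ j = i + 2) := by
    intro i j
    fin_cases i <;> fin_cases j <;>
      first
      | exact iff_of_true (by assumption) (by decide)
      | exact iff_of_false (hirr _) (by decide)
      | exact iff_of_false (has _ _ (by assumption)) (by decide)
  have hinj : Function.Injective f := by
    intro i j hij
    by_contra hne
    have h1 : ¬ (j = i + 1 ∨ j = i + 2) := by
      rw [← hf, hij]; exact hirr _
    have h2 : ¬ (i = j + 1 ∨ i = j + 2) := by
      rw [← hf, hij]; exact hirr _
    clear hij
    revert i j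
    decide
  exact ⟨Equiv.ofBijective f (Finite.injective_iff_bijective.1 hinj), hf⟩

/-- any two tournaments on Fin 5 in which every vertex has out-degree 2
are isomorphic via a relabeling of the vertices. -/
theorem regular_tournaments_isomorphic (r s : Fin 5 → Fin 5 → Prop)
    (hr : IsTournament r) (hs : IsTournament s)
    (h2r : ∀ v, outDeg r v = 2) (h2s : ∀ v, outDeg s v = 2) :
    ∃ π : Equiv.Perm (Fin 5), ∀ a b : Fin 5, s (π a) (π b) ↔ r a b := by
  obtain ⟨p, hp⟩ := exists_cycle r hr h2r
  obtain ⟨q, hq⟩ := exists_cycle s hs h2s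
  refine ⟨p.symm.trans q, fun a b => ?_⟩
  have := hp (p.symm a) (p.symm b)
  simp only [Equiv.apply_symm_apply] at this
  rw [this]
  exact hq _ _
end

section
/- Let T be a tournament on a 5-element vertex set in which every vertex has out-degree exactly 2. Then the edge set of T is the disjoint union of two edge-disjoint directed Hamiltonian cycles: there exist two directed cycles, each passing through all 5 vertices, having no directed edge in common, whose edges together are exactly the edges of T. -/
/-- The adjacency table of a tournament on five vertices, given by its ten edge directions. -/
def tourTable (p q s t u v w x y z : Bool) : Fin 5 → Fin 5 → Bool :=
  ![![false, p, q, s, t],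
    ![!p, false, u, v, w],
    ![!q, !u, false, x, y],
    ![!s, !v, !x, false, z],
    ![!t, !w, !y, !z, false]]

set_option maxRecDepth 100000 in
lemma tourTable_rotational : ∀ p q s t u v w x y z : Bool,
    (∀ i, (Finset.univ.filter fun j => tourTable p q s t u v w x y z i j = true).card = 2) →
    ∃ a, tourTable p q s t u v w x y z 0 a = true ∧
    ∃ b, tourTable p q s t u v w x y z 0 b = true ∧ tourTable p q s t u v w x y z a b = true ∧
    ∃ c, tourTable p q s t u v w x y z a c = true ∧ tourTable p q s t u v w x y z b c = true ∧
      tourTable p q s t u v w x y z c 0 = true ∧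
    ∃ d, tourTable p q s t u v w x y z b d = true ∧ tourTable p q s t u v w x y z c d = true ∧
      tourTable p q s t u v w x y z d 0 = true ∧ tourTable p q s t u v w x y z d a = true := by
  decide +kernel

/-- a tournament on 5 vertices in which every vertex has out-degree 2 is
the edge-disjoint union of two directed Hamiltonian cycles. -/
theorem regular_tournament_two_hamiltonian_cycles (r : Fin 5 → Fin 5 → Prop)
    (hr : IsTournament r) (h2 : ∀ v, outDeg r v = 2) :
    ∃ c d : Fin 5 → Fin 5, Function.Bijective c ∧ Function.Bijective d ∧
      (∀ i : Fin 5, r (c i) (c (i + 1))) ∧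
      (∀ i : Fin 5, r (d i) (d (i + 1))) ∧
      (∀ i j : Fin 5, ¬ (c i = d j ∧ c (i + 1) = d (j + 1))) ∧
      (∀ a b : Fin 5, r a b ↔
        (∃ i : Fin 5, c i = a ∧ c (i + 1) = b) ∨
        (∃ i : Fin 5, d i = a ∧ d (i + 1) = b)) := by
  classical
  obtain ⟨hirr, hx⟩ := hr
  have hneg : ∀ a b : Fin 5, a ≠ b → (decide (r b a) = !decide (r a b)) := by
    intro a b hab
    rcases hx a b hab with ⟨h1, h3⟩ | ⟨h1, h3⟩ <;> simp [h1, h3]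
  have htab : ∀ i j, tourTable (decide (r 0 1)) (decide (r 0 2)) (decide (r 0 3))
      (decide (r 0 4)) (decide (r 1 2)) (decide (r 1 3)) (decide (r 1 4)) (decide (r 2 3))
      (decide (r 2 4)) (decide (r 3 4)) i j = decide (r i j) := by
    intro i j
    rw [eq_comm]
    fin_cases i <;> fin_cases j <;>
      first
      | exact decide_eq_false (hirr _)
      | rfl
      | exact hneg _ _ (by decide)
  have key := tourTable_rotational (decide (r 0 1)) (decide (r 0 2)) (decide (r 0 3))
      (decide (r 0 4)) (decide (r 1 2)) (decide (r 1 3)) (decide (r 1 4)) (decide (r 2 3))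
      (decide (r 2 4)) (decide (r 3 4))
  simp only [htab, decide_eq_true_eq] at key
  obtain ⟨a, h0a, b, h0b, hab, c, hac, hbc, hc0, d, hbd, hcd, hd0, hda⟩ := key (by
    intro i
    have := h2 i
    rw [outDeg, Nat.card_eq_fintype_card, Fintype.card_subtype] at this
    convert this)
  have hanti : ∀ i j, r i j → ¬ r j i := by
    intro i j hij hji
    by_cases h : i = j
    · subst h; exact hirr _ hij
    · rcases hx i j h with ⟨_, h3⟩ | ⟨_, h3⟩
      · exact h3 hji
      · exact h3 hij
  obtain ⟨f, hf⟩ : ∃ f : Fin 5 → Fin 5, f = ![0, a, b, c, d] := ⟨_, rfl⟩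
  have h1 : ∀ i, r (f i) (f (i + 1)) := by
    subst hf; intro i; fin_cases i <;> assumption
  have h22 : ∀ i, r (f i) (f (i + 2)) := by
    subst hf; intro i; fin_cases i <;> assumption
  have hcases : ∀ i j : Fin 5, i = j ∨ j = i + 1 ∨ j = i + 2 ∨ i = j + 1 ∨ i = j + 2 := by decide
  have hinj : Function.Injective f := by
    intro i j hij
    rcases hcases i j with h | h | h | h | h
    · exact h
    · subst h; have := h1 i; rw [← hij] at this; exact (hirr _ this).elim
    · subst h; have := h22 i; rw [← hij] at this; exact (hirr _ this).elim
    · subst h; have := h1 j; rw [hij] at this; exact (hirr _ this).elim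
    · subst h; have := h22 j; rw [hij] at this; exact (hirr _ this).elim
  have hbij : Function.Bijective f := Finite.injective_iff_bijective.mp hinj
  have hdbl : Function.Bijective (fun i : Fin 5 => 2 * i) :=
    Finite.injective_iff_bijective.mp (by decide)
  have hstep : ∀ i : Fin 5, 2 * (i + 1) = 2 * i + 2 := by decide
  refine ⟨f, fun i => f (2 * i), hbij, hbij.comp hdbl, h1, ?_, ?_, ?_⟩
  · intro i
    simp only [hstep]
    exact h22 _
  · rintro i j ⟨e1, e2⟩
    replace e1 := hinj e1
    replace e2 := hinj e2
    clear * - e1 e2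
    revert i j
    decide
  · intro p q
    constructor
    · intro hpq
      obtain ⟨i, rfl⟩ := hbij.2 p
      obtain ⟨j, rfl⟩ := hbij.2 q
      rcases hcases i j with h | h | h | h | h
      · subst h; exact (hirr _ hpq).elim
      · subst h; exact Or.inl ⟨i, rfl, rfl⟩
      · subst h
        obtain ⟨k, rfl⟩ := hdbl.2 i
        exact Or.inr ⟨k, rfl, by simp only [hstep]⟩
      · subst h; exact (hanti _ _ hpq (h1 j)).elim
      · subst h; exact (hanti _ _ hpq (h22 j)).elim
    · rintro (⟨i, rfl, rfl⟩ | ⟨i, rfl, rfl⟩)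
      · exact h1 i
      · simp only [hstep]
        exact h22 _
end

section
/- The number of tournaments on the 5-element set Fin 5 having neither a Condorcet winner (a vertex of out-degree 4) nor a Condorcet loser (a vertex of out-degree 0) is exactly 544. -/
/-- The ten free bits of a tournament on five vertices. -/
abbrev Bits := Bool × Bool × Bool × Bool × Bool × Bool × Bool × Bool × Bool × Bool

/-- The adjacency matrix with the given upper triangle. -/
def relB : Bits → Fin 5 → Fin 5 → Bool
  | (a, b, c, d, e, f, g, h, i, j) =>
    ![![false, a, b, c, d],
      ![!a, false, e, f, g],
      ![!b, !e, false, h, i],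
      ![!c, !f, !h, false, j],
      ![!d, !g, !i, !j, false]]

/-- The computable out-degree. -/
def degB (x : Bits) (v : Fin 5) : ℕ :=
  (relB x v 0).toNat + (relB x v 1).toNat + (relB x v 2).toNat + (relB x v 3).toNat
    + (relB x v 4).toNat

lemma outDeg_relB (x : Bits) (v : Fin 5) :
    outDeg (fun a b => relB x a b = true) v = degB x v := by
  unfold outDeg degB
  rw [Nat.card_eq_fintype_card, Fintype.card_subtype, Finset.card_filter, Fin.sum_univ_five]
  have h : ∀ t : Bool, (if t = true then 1 else 0) = t.toNat := by decide
  simp only [h]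

lemma isTournament_relB (x : Bits) : IsTournament (fun a b => relB x a b = true) := by
  obtain ⟨a, b, c, d, e, f, g, h, i, j⟩ := x
  constructor
  · intro u
    fin_cases u <;> simp [relB]
  · intro u v huv
    have key : ∀ t : Bool, Xor' (t = true) ((!t) = true) ∧ Xor' ((!t) = true) (t = true) := by
      intro t; cases t <;> simp [Xor']
    fin_cases u <;> fin_cases v <;>
      first
        | exact absurd rfl huv
        | exact (key _).1
        | exact (key _).2

lemma relB_injective {x y : Bits} (h : relB x = relB y) : x = y := by
  have h' : ∀ u v, relB x u v = relB y u v := fun u v => by rw [h]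
  obtain ⟨a, b, c, d, e, f, g, p, i, j⟩ := x
  obtain ⟨a', b', c', d', e', f', g', p', i', j'⟩ := y
  have h1 : a = a' := h' 0 1
  have h2 : b = b' := h' 0 2
  have h3 : c = c' := h' 0 3
  have h4 : d = d' := h' 0 4
  have h5 : e = e' := h' 1 2
  have h6 : f = f' := h' 1 3
  have h7 : g = g' := h' 1 4
  have h8 : p = p' := h' 2 3
  have h9 : i = i' := h' 2 4
  have h10 : j = j' := h' 3 4
  subst h1 h2 h3 h4 h5 h6 h7 h8 h9 h10
  rfl

open Classical in
lemma exists_relB {r : Fin 5 → Fin 5 → Prop} (hr : IsTournament r) :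
    ∃ x : Bits, (fun a b => relB x a b = true) = r := by
  refine ⟨(decide (r 0 1), decide (r 0 2), decide (r 0 3), decide (r 0 4), decide (r 1 2),
    decide (r 1 3), decide (r 1 4), decide (r 2 3), decide (r 2 4), decide (r 3 4)), ?_⟩
  obtain ⟨hirr, hx⟩ := hr
  have pos : ∀ u v, (decide (r u v) = true) = r u v := fun u v => by simp
  have neg : ∀ u v, u ≠ v → ((!decide (r u v)) = true) = r v u := fun u v huv => by
    have := hx u v huv
    simp only [Xor', Xor] at this
    simp only [Bool.not_eq_true', decide_eq_false_iff_not, eq_iff_iff]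
    tauto
  have dia : ∀ u, (false = true) = r u u := fun u => by simp [hirr u]
  funext u v
  fin_cases u <;> fin_cases v <;>
    first
      | exact dia _
      | exact pos _ _
      | exact neg _ _ (by decide)

/-- The computable condition: no winner and no loser. -/
def goodB (x : Bits) : Prop := (¬ ∃ w, degB x w = 4) ∧ (¬ ∃ l, degB x l = 0)

instance : DecidablePred goodB := fun x => by unfold goodB; infer_instance

lemma card_goodB : Fintype.card {x : Bits // goodB x} = 544 := by
  decide +kernel

/-- exactly 544 tournaments on Fin 5 have neither a Condorcet winner
(out-degree 4) nor a Condorcet loser (out-degree 0). -/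
theorem count_tournaments_without_CW_CL :
    Nat.card {r : Fin 5 → Fin 5 → Prop //
      IsTournament r ∧ (¬ ∃ w, outDeg r w = 4) ∧ (¬ ∃ l, outDeg r l = 0)} = 544 := by
  rw [← card_goodB, ← Nat.card_eq_fintype_card]
  symm
  refine Nat.card_congr (Equiv.ofBijective
    (fun x => ⟨fun a b => relB x.1 a b = true, isTournament_relB x.1, ?_⟩) ⟨?_, ?_⟩)
  · simp only [outDeg_relB]
    exact x.2
  · intro x y hxy
    apply Subtype.ext
    apply relB_injective
    funext a b
    have := congrFun (congrFun (congrArg Subtype.val hxy) a) b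
    exact Bool.eq_iff_iff.mpr (iff_of_eq this)
  · rintro ⟨r, hr, hg⟩
    obtain ⟨x, rfl⟩ := exists_relB hr
    simp only [outDeg_relB] at hg
    exact ⟨⟨x, hg⟩, rfl⟩
end

section
/- The number of tournaments on the 5-element set Fin 5 having no vertex of out-degree 4, no vertex of out-degree 0, and exactly one vertex of out-degree 2 is exactly 240. -/
/-- The orientations of the ten edges of the complete graph on five vertices. -/
abbrev EdgeCode : Type :=
  Bool × Bool × Bool × Bool × Bool × Bool × Bool × Bool × Bool × Bool

/-- The adjacency table of the tournament with the given orientations. -/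
def codeRel : EdgeCode → Fin 5 → Fin 5 → Bool
  | (a, b, c, d, e, f, g, h, i, j) =>
    ![![false, a, b, c, d],
      ![!a, false, e, f, g],
      ![!b, !e, false, h, i],
      ![!c, !f, !h, false, j],
      ![!d, !g, !i, !j, false]]

/-- Computable out-degree. -/
def codeDeg (t : EdgeCode) (v : Fin 5) : ℕ :=
  (codeRel t v 0).toNat + (codeRel t v 1).toNat + (codeRel t v 2).toNat +
    (codeRel t v 3).toNat + (codeRel t v 4).toNat

/-- The relation of a code. -/
def toRel (t : EdgeCode) : Fin 5 → Fin 5 → Prop := fun a b => codeRel t a b = true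

lemma outDeg_toRel (t : EdgeCode) (v : Fin 5) : outDeg (toRel t) v = codeDeg t v := by
  unfold outDeg toRel codeDeg
  rw [Nat.card_eq_fintype_card, Fintype.card_subtype, Finset.card_filter, Fin.sum_univ_five]
  have key : ∀ b : Bool, (if b = true then 1 else 0) = b.toNat := by decide
  simp only [key]

lemma isTournament_toRel (t : EdgeCode) : IsTournament (toRel t) := by
  obtain ⟨a, b, c, d, e, f, g, h, i, j⟩ := t
  refine ⟨fun x => ?_, fun x y hxy => ?_⟩
  · fin_cases x <;> simp [toRel, codeRel]
  · have key : ∀ b : Bool, Xor' (b = true) ((!b) = true) := by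
      intro b; cases b <;> simp [Xor']
    have key2 : ∀ b : Bool, Xor' ((!b) = true) (b = true) := by
      intro b; cases b <;> simp [Xor']
    fin_cases x <;> fin_cases y <;> first | exact absurd rfl hxy | exact key _ | exact key2 _

lemma toRel_injective : Function.Injective toRel := by
  intro s t hst
  have H : ∀ x y, codeRel s x y = codeRel t x y := fun x y =>
    Bool.eq_iff_iff.mpr (iff_of_eq (congrFun (congrFun hst x) y))
  obtain ⟨a, b, c, d, e, f, g, h, i, j⟩ := s
  obtain ⟨a2, b2, c2, d2, e2, f2, g2, h2, i2, j2⟩ := t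
  obtain rfl : a = a2 := H 0 1
  obtain rfl : b = b2 := H 0 2
  obtain rfl : c = c2 := H 0 3
  obtain rfl : d = d2 := H 0 4
  obtain rfl : e = e2 := H 1 2
  obtain rfl : f = f2 := H 1 3
  obtain rfl : g = g2 := H 1 4
  obtain rfl : h = h2 := H 2 3
  obtain rfl : i = i2 := H 2 4
  obtain rfl : j = j2 := H 3 4
  rfl

lemma exists_toRel (r : Fin 5 → Fin 5 → Prop) (hr : IsTournament r) : ∃ t, toRel t = r := by
  classical
  refine ⟨(decide (r 0 1), decide (r 0 2), decide (r 0 3), decide (r 0 4), decide (r 1 2),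
    decide (r 1 3), decide (r 1 4), decide (r 2 3), decide (r 2 4), decide (r 3 4)), ?_⟩
  have pos : ∀ p : Prop, (decide p = true) = p := fun p => by simp
  have neg : ∀ x y, x ≠ y → (((!decide (r x y)) = true) = r y x) := by
    intro x y hxy
    have := hr.2 x y hxy
    simp only [Xor', Xor] at this
    simp only [Bool.not_eq_true', decide_eq_false_iff_not, eq_iff_iff]
    tauto
  have diag : ∀ x, (false = true) = r x x := fun x => by simp [hr.1 x]
  funext x y
  fin_cases x <;> fin_cases y <;>
    first | exact diag _ | exact pos _ | exact neg _ _ (by decide)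

/-- The decidable form of the property on codes. -/
abbrev GoodCode (t : EdgeCode) : Prop :=
  (∀ w, codeDeg t w ≠ 4) ∧ (∀ l, codeDeg t l ≠ 0) ∧
    ∃ v, codeDeg t v = 2 ∧ ∀ y, codeDeg t y = 2 → y = v

set_option maxRecDepth 100000 in
lemma card_goodCode : Fintype.card {t : EdgeCode // GoodCode t} = 240 := by
  decide +kernel

lemma goodCode_iff (t : EdgeCode) : GoodCode t ↔
    (IsTournament (toRel t) ∧ (¬ ∃ w, outDeg (toRel t) w = 4) ∧
      (¬ ∃ l, outDeg (toRel t) l = 0) ∧ (∃! v, outDeg (toRel t) v = 2)) := by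
  simp only [outDeg_toRel, isTournament_toRel, true_and, not_exists]
  rfl

/-- exactly 240 tournaments on Fin 5 have no vertex of out-degree 4,
no vertex of out-degree 0, and exactly one vertex of out-degree 2
(the union Γ₁,₁ ∪ Γ₁,₂). -/
theorem count_one_vertex_of_outdegree_two :
    Nat.card {r : Fin 5 → Fin 5 → Prop //
      IsTournament r ∧ (¬ ∃ w, outDeg r w = 4) ∧ (¬ ∃ l, outDeg r l = 0) ∧
      (∃! v, outDeg r v = 2)} = 240 := by
  rw [← card_goodCode, ← Nat.card_eq_fintype_card]
  symm
  refine Nat.card_congr (Equiv.ofBijective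
    (fun t => ⟨toRel t.1, (goodCode_iff t.1).mp t.2⟩) ⟨?_, ?_⟩)
  · intro s t hst
    exact Subtype.ext (toRel_injective (congrArg Subtype.val hst))
  · rintro ⟨r, hr⟩
    obtain ⟨t, rfl⟩ := exists_toRel r hr.1
    exact ⟨⟨t, (goodCode_iff t).mpr hr⟩, rfl⟩
end

section
/- The number of tournaments on the 5-element set Fin 5 having no vertex of out-degree 4, no vertex of out-degree 0, exactly three vertices of out-degree 2 which form a directed 3-cycle among themselves, and such that the (unique) vertex of out-degree 3 does not defeat all three out-degree-2 vertices, is exactly 120. -/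
/-- The ten upper-triangular entries of a tournament matrix on `Fin 5`. -/
abbrev Code : Type :=
  Bool × Bool × Bool × Bool × Bool × Bool × Bool × Bool × Bool × Bool

/-- The tournament matrix with given upper-triangular entries. -/
def mat : Code → Fin 5 → Fin 5 → Bool
  | (a, b, c, d, e, f, g, h, i, j) =>
    ![![false, a, b, c, d],
      ![!a, false, e, f, g],
      ![!b, !e, false, h, i],
      ![!c, !f, !h, false, j],
      ![!d, !g, !i, !j, false]]

/-- Computable out-degree. -/
def deg (m : Fin 5 → Fin 5 → Bool) (v : Fin 5) : ℕ :=
  (m v 0).toNat + (m v 1).toNat + (m v 2).toNat + (m v 3).toNat + (m v 4).toNat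

theorem outDeg_eq (m : Fin 5 → Fin 5 → Bool) (v : Fin 5) :
    outDeg (fun i j => m i j = true) v = deg m v := by
  unfold outDeg deg
  rw [Nat.card_eq_fintype_card, Fintype.card_subtype, Finset.card_filter, Fin.sum_univ_five]
  simp only [Bool.toNat, Bool.cond_eq_ite]

/-- Decidable version of the condition. -/
abbrev Cond (m : Fin 5 → Fin 5 → Bool) : Prop :=
  (¬ ∃ w, deg m w = 4) ∧ (¬ ∃ l, deg m l = 0) ∧
      (∃ u v t : Fin 5, u ≠ v ∧ v ≠ t ∧ u ≠ t ∧
        deg m u = 2 ∧ deg m v = 2 ∧ deg m t = 2 ∧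
        (∀ x, deg m x = 2 → x = u ∨ x = v ∨ x = t) ∧
        m u v = true ∧ m v t = true ∧ m t u = true ∧
        (∀ x, deg m x = 3 → ¬ (m x u = true ∧ m x v = true ∧ m x t = true)))

theorem mat_tournament (x : Code) : IsTournament (fun i j => mat x i j = true) := by
  obtain ⟨a, b, c, d, e, f, g, h, i, j⟩ := x
  constructor
  · intro v
    fin_cases v <;> simp [mat]
  · intro v w hvw
    fin_cases v <;> fin_cases w <;> simp [mat, Xor', xor_def] at hvw ⊢

theorem mat_injective : Function.Injective mat := by
  rintro ⟨a, b, c, d, e, f, g, h, i, j⟩ ⟨ya, yb, yc, yd, ye, yf, yg, yh, yi, yj⟩ hh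
  have h1 := congrFun (congrFun hh 0)
  have h2 := congrFun (congrFun hh 1)
  have h3 := congrFun (congrFun hh 2)
  have h4 := congrFun (congrFun hh 3)
  have e1 : a = ya := h1 1
  have e2 : b = yb := h1 2
  have e3 : c = yc := h1 3
  have e4 : d = yd := h1 4
  have e5 : e = ye := h2 2
  have e6 : f = yf := h2 3
  have e7 : g = yg := h2 4
  have e8 : h = yh := h3 3
  have e9 : i = yi := h3 4
  have e10 : j = yj := h4 4
  subst e1 e2 e3 e4 e5 e6 e7 e8 e9 e10
  rfl

open Classical in
theorem mat_surj (r : Fin 5 → Fin 5 → Prop) (hr : IsTournament r) :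
    ∃ x : Code, (fun i j => mat x i j = true) = r := by
  refine ⟨(decide (r 0 1), decide (r 0 2), decide (r 0 3), decide (r 0 4), decide (r 1 2),
    decide (r 1 3), decide (r 1 4), decide (r 2 3), decide (r 2 4), decide (r 3 4)), ?_⟩
  obtain ⟨h1, h2⟩ := hr
  have h3 : ∀ a b : Fin 5, a ≠ b → (¬ r a b ↔ r b a) := by
    intro a b hab
    have := h2 a b hab
    simp only [Xor', xor_def] at this
    tauto
  funext v w
  apply propext
  fin_cases v <;> fin_cases w <;> simp [mat, h1] <;> exact h3 _ _ (by decide)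

theorem card_code : Fintype.card {x : Code // Cond (mat x)} = 120 := by
  decide +kernel

/-- exactly 120 tournaments on Fin 5 have no vertex of out-degree 4,
no vertex of out-degree 0, exactly three vertices of out-degree 2 forming a directed
3-cycle, and the (unique) vertex of out-degree 3 does not defeat all three of them
(the class Γ₂,₂). -/
theorem count_Gamma22 :
    Nat.card {r : Fin 5 → Fin 5 → Prop //
      IsTournament r ∧ (¬ ∃ w, outDeg r w = 4) ∧ (¬ ∃ l, outDeg r l = 0) ∧
      (∃ u v t : Fin 5, u ≠ v ∧ v ≠ t ∧ u ≠ t ∧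
        outDeg r u = 2 ∧ outDeg r v = 2 ∧ outDeg r t = 2 ∧
        (∀ x, outDeg r x = 2 → x = u ∨ x = v ∨ x = t) ∧
        r u v ∧ r v t ∧ r t u ∧
        (∀ x, outDeg r x = 3 → ¬ (r x u ∧ r x v ∧ r x t)))} = 120 := by
  rw [← card_code, ← Nat.card_eq_fintype_card]
  symm
  refine Nat.card_eq_of_bijective (fun x => ⟨fun i j => mat x.1 i j = true,
    mat_tournament x.1, by simpa only [outDeg_eq] using x.2⟩) ⟨?_, ?_⟩
  · rintro ⟨x, hx⟩ ⟨y, hy⟩ hxy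
    apply Subtype.ext
    apply mat_injective
    funext i j
    have h := congrFun (congrFun (congrArg Subtype.val hxy) i) j
    exact Bool.eq_iff_iff.mpr (iff_of_eq h)
  · rintro ⟨r, hr, hc⟩
    obtain ⟨x, rfl⟩ := mat_surj r hr
    exact ⟨⟨x, by simpa only [outDeg_eq] using hc⟩, rfl⟩
end

section
/- The number of tournaments on the 5-element set Fin 5 having no vertex of out-degree 4, no vertex of out-degree 0, and exactly three vertices of out-degree 2 whose induced sub-tournament is transitive (a strict linear order on the three vertices), is exactly 120. -/
/-- Codes of tournaments: the ten orientations of the pairs `a < b`. -/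
abbrev TCode := Bool × Bool × Bool × Bool × Bool × Bool × Bool × Bool × Bool × Bool

/-- The tournament with a given code. -/
def tRel : TCode → Fin 5 → Fin 5 → Bool
  | (p, q, s, t, u, v, w, x, y, z) =>
    ![![false, p, q, s, t], ![!p, false, u, v, w], ![!q, !u, false, x, y],
      ![!s, !v, !x, false, z], ![!t, !w, !y, !z, false]]

/-- Computable out-degree. -/
def tDeg (c : TCode) (a : Fin 5) : ℕ :=
  (tRel c a 0).toNat + (tRel c a 1).toNat + (tRel c a 2).toNat + (tRel c a 3).toNat
    + (tRel c a 4).toNat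

/-- The class, on codes. -/
abbrev TGood (c : TCode) : Prop :=
  (¬ ∃ w, tDeg c w = 4) ∧ (¬ ∃ l, tDeg c l = 0) ∧
      (∃ u v t : Fin 5, u ≠ v ∧ v ≠ t ∧ u ≠ t ∧
        tDeg c u = 2 ∧ tDeg c v = 2 ∧ tDeg c t = 2 ∧
        (∀ x, tDeg c x = 2 → x = u ∨ x = v ∨ x = t) ∧
        tRel c u v = true ∧ tRel c v t = true ∧ tRel c u t = true)

set_option maxRecDepth 100000 in
theorem card_TGood : Fintype.card {c : TCode // TGood c} = 120 := by
  decide +kernel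

theorem outDeg_tRel (c : TCode) (a : Fin 5) :
    outDeg (fun i j => tRel c i j = true) a = tDeg c a := by
  unfold outDeg tDeg
  rw [Nat.card_eq_fintype_card, Fintype.card_subtype, Finset.card_filter, Fin.sum_univ_five]
  simp only [Bool.toNat, Bool.cond_eq_ite]

theorem tRel_tournament (c : TCode) : IsTournament (fun i j => tRel c i j = true) := by
  obtain ⟨p, q, s, t, u, v, w, x, y, z⟩ := c
  refine ⟨fun a => ?_, fun a b hab => ?_⟩
  · fin_cases a <;> simp [tRel]
  · fin_cases a <;> fin_cases b <;> first | exact absurd rfl hab | (simp [tRel, Xor', xor_def]; try tauto)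

theorem tRel_injective {c d : TCode} (h : ∀ i j, tRel c i j = tRel d i j) : c = d := by
  have h1 := h 0 1
  have h2 := h 0 2
  have h3 := h 0 3
  have h4 := h 0 4
  have h5 := h 1 2
  have h6 := h 1 3
  have h7 := h 1 4
  have h8 := h 2 3
  have h9 := h 2 4
  have h10 := h 3 4
  simp [tRel] at h1 h2 h3 h4 h5 h6 h7 h8 h9 h10
  simp [Prod.ext_iff, *]

open Classical in
theorem tRel_surjective {r : Fin 5 → Fin 5 → Prop} (h : IsTournament r) :
    ∃ c, (fun i j => tRel c i j = true) = r := by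
  refine ⟨(decide (r 0 1), decide (r 0 2), decide (r 0 3), decide (r 0 4), decide (r 1 2),
    decide (r 1 3), decide (r 1 4), decide (r 2 3), decide (r 2 4), decide (r 3 4)), ?_⟩
  obtain ⟨hi, hx⟩ := h
  have key : ∀ a b : Fin 5, a ≠ b → (¬ r a b ↔ r b a) := by
    intro a b hab
    have := hx a b hab
    simp only [Xor', xor_def] at this
    tauto
  funext i j
  apply propext
  fin_cases i <;> fin_cases j <;> simp [tRel, hi] <;> exact key _ _ (by decide)

/-- exactly 120 tournaments on Fin 5 have no vertex of out-degree 4,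
no vertex of out-degree 0, and exactly three vertices of out-degree 2, whose induced
sub-tournament is transitive, i.e. linearly ordered u → v → t with u → t
(the class Γ₂,₃). -/
theorem count_Gamma23 :
    Nat.card {r : Fin 5 → Fin 5 → Prop //
      IsTournament r ∧ (¬ ∃ w, outDeg r w = 4) ∧ (¬ ∃ l, outDeg r l = 0) ∧
      (∃ u v t : Fin 5, u ≠ v ∧ v ≠ t ∧ u ≠ t ∧
        outDeg r u = 2 ∧ outDeg r v = 2 ∧ outDeg r t = 2 ∧
        (∀ x, outDeg r x = 2 → x = u ∨ x = v ∨ x = t) ∧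
        r u v ∧ r v t ∧ r u t)} = 120 := by
  rw [← card_TGood, ← Nat.card_eq_fintype_card]
  symm
  refine Nat.card_congr (Equiv.ofBijective
    (fun c => ⟨fun i j => tRel c.1 i j = true, tRel_tournament c.1, ?_⟩) ⟨?_, ?_⟩)
  · simp only [outDeg_tRel]
    exact c.2
  · intro c d hcd
    apply Subtype.ext
    apply tRel_injective
    intro i j
    have h := congrFun (congrFun (congrArg Subtype.val hcd) i) j
    exact Bool.eq_iff_iff.mpr (iff_of_eq h)
  · rintro ⟨r, hr, hg⟩
    obtain ⟨c, rfl⟩ := tRel_surjective hr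
    simp only [outDeg_tRel] at hg
    exact ⟨⟨c, hg⟩, rfl⟩
end
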